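/- arXiv:2507.10821 — 2 statements merged into one kernel-verified Lean document; each statement's English description precedes it below -/
import Mathlib

section
/- Let N ≥ 1 and let m_{ij} ∈ ℝ be given for i,j ∈ {1,…,N+1}, with m_{ij} = m_{ji} whenever i,j ∈ {2,…,N+1}. Define the real 2(N+1)×2(N+1) matrix 𝓛'_N as the (N+1)×(N+1) block matrix with 2×2 blocks: A₁₁ has rows (1, 0) and (m₁₁, N+1); for j ∈ {2,…,N+1}, A_{1j} has rows (0, 0) and (0, m_{1j}), and A_{j1} has rows (−m_{1j}, 0) and (0, 0); for i = j with i ≥ 2, A_{ii} has rows (N+1, m_{ii}) and (0, 1); and for i ≠ j with i,j ≥ 2, A_{ij} has rows (0, m_{ij}) and (0, 0). Then 𝓛'_N is invertible and satisfies (𝓛'_N)^T P₋ 𝓛'_N = P₊ (equivalently, ⟨P₋ 𝓛'_N x, 𝓛'_N y⟩ = ⟨P₊ x, y⟩ for all x, y ∈ ℂ^(2(N+1))). -/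
/-!
Listing the coordinates `(i, 0)` before the coordinates `(i, 1)` turns `P₊` into `-J` and `𝓛'_N`
into a matrix with blocks `A, B, C, D`, and `(𝓛'_N)ᵀ P₋ 𝓛'_N = P₊` says that `𝓛'_N` scales the
symplectic form by `N + 1`: both `Cᵀ A` and `Bᵀ D` are symmetric and `Aᵀ D - Cᵀ B = N + 1`. Here
`C` is supported on the distinguished diagonal entry and `B` off the distinguished row and column,
so `Cᵀ B = 0`, `Cᵀ A = Cᵀ` and `Bᵀ D = Bᵀ`. What remains is `Aᵀ D = N + 1`, where the entries
`-m_{1j}` of `A` cancel the entries `m_{1j}` of `D`. Invertibility of `P₊` passes to `𝓛'_N`, and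
the sesquilinear identity holds because `𝓛'_N` is real.
-/

open scoped BigOperators
open Matrix

/-- The standard Hermitian inner product on `ι → ℂ`, linear in the first argument and
conjugate-linear in the second. -/
noncomputable def herm {ι : Type*} [Fintype ι] (x y : ι → ℂ) : ℂ :=
  ∑ i, x i * (starRingEnd ℂ) (y i)

/-- The block-diagonal matrix `P₊` consisting of `n = N+1` copies of
`P₀ = [[0,1],[-1,0]]` on the diagonal; indices modelled as `Fin (N+1) × Fin 2`. -/
noncomputable def Pplus (N : ℕ) : Matrix (Fin (N + 1) × Fin 2) (Fin (N + 1) × Fin 2) ℂ :=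
  fun p q =>
    if p.1 = q.1 then
      (if p.2 = 0 ∧ q.2 = 1 then 1 else if p.2 = 1 ∧ q.2 = 0 then -1 else 0)
    else 0

/-- `P₋ = (1/(N+1)) • P₊`. -/
noncomputable def Pminus (N : ℕ) : Matrix (Fin (N + 1) × Fin 2) (Fin (N + 1) × Fin 2) ℂ :=
  (((N : ℂ) + 1)⁻¹) • Pplus N

/-- The block matrix `𝓛'_N`: `A₁₁ = [[1,0],[m₁₁,N+1]]`; for `j ≥ 2`,
`A_{1j} = [[0,0],[0,m_{1j}]]` and `A_{j1} = [[−m_{1j},0],[0,0]]`; for `i ≥ 2`,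
`A_{ii} = [[N+1,m_{ii}],[0,1]]`; for `i ≠ j`, `i,j ≥ 2`, `A_{ij} = [[0,m_{ij}],[0,0]]`.
Block index `0 : Fin (N+1)` plays the role of the paper's index `1`. -/
noncomputable def LN'mat (N : ℕ) (m : Fin (N + 1) → Fin (N + 1) → ℝ) :
    Matrix (Fin (N + 1) × Fin 2) (Fin (N + 1) × Fin 2) ℂ :=
  fun p q =>
    if p.1 = 0 then
      (if q.1 = 0 then
        (if p.2 = 0 ∧ q.2 = 0 then 1
         else if p.2 = 1 ∧ q.2 = 0 then (m 0 0 : ℂ)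
         else if p.2 = 1 ∧ q.2 = 1 then ((N : ℂ) + 1) else 0)
       else
        (if p.2 = 1 ∧ q.2 = 1 then (m 0 q.1 : ℂ) else 0))
    else
      (if q.1 = 0 then
        (if p.2 = 0 ∧ q.2 = 0 then -(m 0 p.1 : ℂ) else 0)
       else if p.1 = q.1 then
        (if p.2 = 0 ∧ q.2 = 0 then ((N : ℂ) + 1)
         else if p.2 = 0 ∧ q.2 = 1 then (m p.1 q.1 : ℂ)
         else if p.2 = 1 ∧ q.2 = 1 then 1 else 0)
       else
        (if p.2 = 0 ∧ q.2 = 1 then (m p.1 q.1 : ℂ) else 0))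

section Symplectic

variable {l R : Type*} [Fintype l] [DecidableEq l] [CommRing R]

lemma fromBlocks_transpose_mul_J_mul_fromBlocks (A B C D : Matrix l l R) :
    (fromBlocks A B C D)ᵀ * J l R * fromBlocks A B C D =
      fromBlocks (Cᵀ * A - Aᵀ * C) (Cᵀ * B - Aᵀ * D) (Dᵀ * A - Bᵀ * C) (Dᵀ * B - Bᵀ * D) := by
  simp [J, fromBlocks_transpose, fromBlocks_multiply, sub_eq_add_neg]

lemma fromBlocks_transpose_mul_J_mul_fromBlocks_eq_smul {A B C D : Matrix l l R} {c : R}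
    (hCA : (Cᵀ * A).IsSymm) (hBD : (Bᵀ * D).IsSymm) (hAD : Aᵀ * D - Cᵀ * B = c • 1) :
    (fromBlocks A B C D)ᵀ * J l R * fromBlocks A B C D = c • J l R := by
  have hAC : Aᵀ * C = Cᵀ * A := by simpa using hCA.eq
  have hDB : Dᵀ * B = Bᵀ * D := by simpa using hBD.eq
  have hDA : Dᵀ * A - Bᵀ * C = c • 1 := by simpa using congrArg transpose hAD
  rw [fromBlocks_transpose_mul_J_mul_fromBlocks, hAC, hDB, hDA, ← neg_sub (Aᵀ * D), hAD, J,
    fromBlocks_smul]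
  simp

end Symplectic

lemma vecMul_updateRow {l n R : Type*} [Fintype l] [DecidableEq l] [NonUnitalNonAssocSemiring R]
    (u : l → R) (A : Matrix l n R) (o : l) (w : n → R) :
    u ᵥ* A.updateRow o w = Function.update u o 0 ᵥ* A + fun j => u o * w j := by
  ext j
  have hterm (i : l) : u i * A.updateRow o w i j =
      Function.update u o 0 i * A i j + if i = o then u o * w j else 0 := by
    obtain rfl | hi := eq_or_ne i o
    · simp
    · simp [hi]
  simp [vecMul, dotProduct, hterm, Finset.sum_add_distrib]

lemma mul_updateRow_of_col_eq_zero {k l n R : Type*} [Fintype l] [DecidableEq l]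
    [NonUnitalNonAssocSemiring R] {M : Matrix k l R} {o : l} (hM : M.col o = 0)
    (N : Matrix l n R) (w : n → R) : M * N.updateRow o w = M * N := by
  ext i j
  have hMo : M i o = 0 := congrFun hM i
  have hMi : Function.update (M i) o 0 = M i := Function.update_eq_self_iff.mpr hMo.symm
  simp only [mul_apply_eq_vecMul, vecMul_updateRow, hMi, hMo, zero_mul, Pi.add_apply, add_zero]

lemma single_mul_of_row_eq_single {k l n R : Type*} [Fintype l] [DecidableEq k] [DecidableEq l]
    [DecidableEq n] [NonAssocSemiring R] {A : Matrix l n R} {j : l} {p : n}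
    (hA : A.row j = Pi.single p 1) (i : k) (a : R) : single i j a * A = single i p a := by
  have hsmul : a • (Pi.single p 1 : n → R) = Pi.single p a := by
    ext q
    simp [Pi.single_apply]
  rw [single_mul_eq_updateRow_zero, hA, hsmul, single_eq_updateRow_zero]

lemma smul_one_updateRow_mul_one_updateRow {l R : Type*} [Fintype l] [DecidableEq l] [Semiring R]
    {o : l} {c : R} {u w : l → R} (hu : u o = 1) (hw : w o = c)
    (huw : ∀ j, j ≠ o → u j + w j = 0) :
    (c • (1 : Matrix l l R)).updateRow o u * (1 : Matrix l l R).updateRow o w = c • 1 := by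
  have hrow : u ᵥ* (1 : Matrix l l R).updateRow o w = Pi.single o c := by
    ext j
    obtain rfl | hj := eq_or_ne j o
    · simp [vecMul_updateRow, hu, hw]
    · simp [vecMul_updateRow, hu, hj, huw]
  ext i j
  obtain rfl | hi := eq_or_ne i o
  · simp [updateRow_mul, hrow, one_apply, Pi.single_apply, eq_comm]
  · simp [updateRow_mul, hi]

/-- The block form of `𝓛'_N` over a ring. The distinguished index `o` stands for the index `1` of
`𝓛'_N`, `c` for `N + 1`, `a` for `m₁₁`, `v` for the row `m_{1j}` (the value `v o` is ignored)
and `S` for the symmetric block `m_{ij}`, `i, j ≥ 2`, extended by zero. -/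
def loopingEdgeMatrix {l R : Type*} [DecidableEq l] [Ring R] (o : l) (c a : R) (v : l → R)
    (S : Matrix l l R) : Matrix (l ⊕ l) (l ⊕ l) R :=
  fromBlocks ((c • (1 : Matrix l l R)).updateCol o (Function.update (-v) o 1)) S
    (single o o a) ((1 : Matrix l l R).updateRow o (Function.update v o c))

lemma loopingEdgeMatrix_transpose_mul_J_mul {l R : Type*} [Fintype l] [DecidableEq l]
    [CommRing R] {o : l} (c a : R) (v : l → R) {S : Matrix l l R} (hS : S.IsSymm)
    (hSo : S.row o = 0) :
    (loopingEdgeMatrix o c a v S)ᵀ * J l R * loopingEdgeMatrix o c a v S = c • J l R := by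
  refine fromBlocks_transpose_mul_J_mul_fromBlocks_eq_smul ?_ ?_ ?_
  · have hrow : ((c • (1 : Matrix l l R)).updateCol o (Function.update (-v) o 1)).row o =
        Pi.single o 1 := by
      ext j
      obtain rfl | hj := eq_or_ne j o
      · simp
      · simp [hj, hj.symm]
    have hCA := single_mul_of_row_eq_single hrow o a
    rw [transpose_single, hCA]
    exact transpose_single ..
  · rw [mul_updateRow_of_col_eq_zero (M := Sᵀ) hSo, Matrix.mul_one]
    exact hS.transpose
  · have hCB : (single o o a)ᵀ * S = 0 := by
      rw [transpose_single, single_mul_eq_updateRow_zero, hSo, smul_zero, updateRow_zero_zero]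
    rw [hCB, sub_zero, ← updateRow_transpose, transpose_smul, transpose_one]
    exact smul_one_updateRow_mul_one_updateRow (by simp) (by simp) fun j hj => by simp [hj]

lemma isUnit_of_isUnit_mul_right {n R : Type*} [Fintype n] [DecidableEq n] [CommRing R]
    {A B : Matrix n n R} (h : IsUnit (A * B)) : IsUnit B := by
  rw [isUnit_iff_isUnit_det] at h ⊢
  exact isUnit_of_mul_isUnit_right (det_mul A B ▸ h)

lemma herm_mulVec_right {m n : Type*} [Fintype m] [Fintype n] (A : Matrix m n ℂ)
    (x : m → ℂ) (y : n → ℂ) : herm x (A *ᵥ y) = herm (Aᴴ *ᵥ x) y := by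
  change x ⬝ᵥ star (A *ᵥ y) = (Aᴴ *ᵥ x) ⬝ᵥ star y
  rw [star_mulVec, dotProduct_comm, ← dotProduct_mulVec, dotProduct_comm]

/-- The reordering that lists the coordinates `(i, 0)` before the coordinates `(i, 1)`, used to
compare `P₊` with `Matrix.J`. -/
def prodFinTwoEquivSum (ι : Type*) : ι × Fin 2 ≃ ι ⊕ ι :=
  (Equiv.prodComm ι (Fin 2)).trans
    ((finTwoEquiv.prodCongr (Equiv.refl ι)).trans (Equiv.boolProdEquivSum ι))

@[simp]
lemma prodFinTwoEquivSum_zero {ι : Type*} (i : ι) : prodFinTwoEquivSum ι (i, 0) = Sum.inl i := rfl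

@[simp]
lemma prodFinTwoEquivSum_one {ι : Type*} (i : ι) : prodFinTwoEquivSum ι (i, 1) = Sum.inr i := rfl

lemma Pplus_eq_neg_J_submatrix (N : ℕ) :
    Pplus N = (-J (Fin (N + 1)) ℂ).submatrix (prodFinTwoEquivSum _) (prodFinTwoEquivSum _) := by
  ext ⟨i, a⟩ ⟨j, b⟩
  fin_cases a <;> fin_cases b <;> simp [Pplus, J, one_apply, neg_ite]

lemma isUnit_Pplus (N : ℕ) : IsUnit (Pplus N) := by
  rw [Pplus_eq_neg_J_submatrix, isUnit_submatrix_equiv, IsUnit.neg_iff, isUnit_iff_isUnit_det]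
  exact isUnit_det_J _ _

lemma LN'mat_eq_loopingEdgeMatrix_submatrix (N : ℕ) (m : Fin (N + 1) → Fin (N + 1) → ℝ) :
    LN'mat N m = (loopingEdgeMatrix 0 ((N : ℂ) + 1) (m 0 0 : ℂ) (fun j => (m 0 j : ℂ))
      (of fun i j => if i = 0 ∨ j = 0 then 0 else (m i j : ℂ))).submatrix
        (prodFinTwoEquivSum _) (prodFinTwoEquivSum _) := by
  ext ⟨i, a⟩ ⟨j, b⟩
  fin_cases a <;> fin_cases b <;> by_cases hi : i = 0 <;> by_cases hj : j = 0 <;>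
    simp [LN'mat, loopingEdgeMatrix, updateRow_apply, one_apply, hi, hj, eq_comm]

lemma LN'mat_transpose_mul_Pplus_mul {N : ℕ} {m : Fin (N + 1) → Fin (N + 1) → ℝ}
    (hm : ∀ i j : Fin (N + 1), i ≠ 0 → j ≠ 0 → m i j = m j i) :
    (LN'mat N m)ᵀ * Pplus N * LN'mat N m = ((N : ℂ) + 1) • Pplus N := by
  have hS : (of fun i j => if i = 0 ∨ j = 0 then (0 : ℂ) else m i j).IsSymm := by
    ext i j
    by_cases hi : i = 0 <;> by_cases hj : j = 0 <;> simp [hi, hj, hm j i]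
  rw [LN'mat_eq_loopingEdgeMatrix_submatrix, Pplus_eq_neg_J_submatrix, transpose_submatrix,
    submatrix_mul_equiv, submatrix_mul_equiv, Matrix.mul_neg, Matrix.neg_mul,
    loopingEdgeMatrix_transpose_mul_J_mul _ _ _ hS (by ext; simp), ← smul_neg, submatrix_smul]
  rfl

lemma LN'mat_transpose_mul_Pminus_mul {N : ℕ} {m : Fin (N + 1) → Fin (N + 1) → ℝ}
    (hm : ∀ i j : Fin (N + 1), i ≠ 0 → j ≠ 0 → m i j = m j i) :
    (LN'mat N m)ᵀ * Pminus N * LN'mat N m = Pplus N := by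
  rw [Pminus, Matrix.mul_smul, Matrix.smul_mul, LN'mat_transpose_mul_Pplus_mul hm,
    inv_smul_smul₀ N.cast_add_one_ne_zero]

lemma LN'mat_conjTranspose (N : ℕ) (m : Fin (N + 1) → Fin (N + 1) → ℝ) :
    (LN'mat N m)ᴴ = (LN'mat N m)ᵀ := by
  ext p q
  simp only [conjTranspose_apply, transpose_apply, LN'mat]
  split_ifs <;> simp

/-- For real parameters `m_{ij}` which are symmetric in the indices
`i, j ∈ {2, …, N+1}`, the matrix `𝓛'_N` is invertible and satisfies
`(𝓛'_N)ᵀ P₋ 𝓛'_N = P₊`, equivalently `⟨P₋ 𝓛'_N x, 𝓛'_N y⟩ = ⟨P₊ x, y⟩` for all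
`x, y ∈ ℂ^(2(N+1))`. -/
theorem LN'_is_unitary (N : ℕ) (hN : 1 ≤ N) (m : Fin (N + 1) → Fin (N + 1) → ℝ)
    (hm : ∀ i j : Fin (N + 1), i ≠ 0 → j ≠ 0 → m i j = m j i) :
    IsUnit (LN'mat N m) ∧
    (LN'mat N m)ᵀ * Pminus N * LN'mat N m = Pplus N ∧
    ∀ x y : Fin (N + 1) × Fin 2 → ℂ,
      herm ((Pminus N).mulVec ((LN'mat N m).mulVec x)) ((LN'mat N m).mulVec y)
        = herm ((Pplus N).mulVec x) y := by
  have hform := LN'mat_transpose_mul_Pminus_mul hm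
  refine ⟨isUnit_of_isUnit_mul_right (hform ▸ isUnit_Pplus N), hform, fun x y => ?_⟩
  rw [herm_mulVec_right, LN'mat_conjTranspose, mulVec_mulVec, mulVec_mulVec, hform]
end

section
/- Let L > 0, let N be a positive integer, let Z < 0, and let ω > N²/Z². Define Ψ(x) = √(2ω)·sech(√ω·(x−L) + arctanh(−N/(Z·√ω))) for x ≥ L, where sech t = 1/cosh t. If N·Ψ'(L) = Z·Ψ''(L), then ω·Z² = N². In particular, since ω > N²/Z², the equality N·Ψ'(L) = Z·Ψ''(L) is impossible. -/
/-!
The phase of the soliton is chosen so that `tanh` of it is `-N / (Z √ω)`. Since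
`Ψ' = -√ω tanh(·) Ψ` and `Ψ'' = ω (2 tanh²(·) - 1) Ψ`, this says at `L` that `Z Ψ' = N Ψ`
and `Z² Ψ'' = (2 N² - ω Z²) Ψ`. Hence `Z (N Ψ' - Z Ψ'') = (ω Z² - N²) Ψ` at `L`, and `Ψ` never
vanishes.
-/

open Set MeasureTheory

/-- The inverse hyperbolic tangent, `arctanh y = (1/2)·log((1+y)/(1−y))`. -/
noncomputable def arctanh (y : ℝ) : ℝ := (1 / 2) * Real.log ((1 + y) / (1 - y))

/-- The tail-soliton profile
`Ψ(x) = √(2ω)·sech(√ω·(x−L) + arctanh(−N/(Z·√ω)))`, where `sech t = 1/cosh t`. -/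
noncomputable def tailProfile (L ω Z : ℝ) (N : ℕ) : ℝ → ℝ := fun x =>
  Real.sqrt (2 * ω) *
    (1 / Real.cosh (Real.sqrt ω * (x - L) + arctanh (-(N : ℝ) / (Z * Real.sqrt ω))))

theorem tanh_arctanh {y : ℝ} (hy : y ∈ Ioo (-1) 1) : Real.tanh (arctanh y) = y := by
  rw [arctanh, ← Real.artanh_eq_half_log (Ioo_subset_Icc_self hy), Real.tanh_artanh hy]

theorem neg_div_mul_sqrt_mem_Ioo {ν Z ω : ℝ} (hZ : Z ≠ 0) (hω : ν ^ 2 / Z ^ 2 < ω) :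
    -ν / (Z * √ω) ∈ Ioo (-1) 1 := by
  have hω0 : 0 < ω := lt_of_le_of_lt (by positivity) hω
  have hsq : (-ν / (Z * √ω)) ^ 2 < 1 := by
    rwa [div_pow, neg_sq, mul_pow, Real.sq_sqrt hω0.le, ← div_div, div_lt_one hω0]
  exact abs_lt.1 ((sq_lt_one_iff_abs_lt_one _).1 hsq)

theorem hasDerivAt_tanh (x : ℝ) : HasDerivAt Real.tanh (1 - Real.tanh x ^ 2) x := by
  have hcosh := (Real.cosh_pos x).ne'
  rw [funext Real.tanh_eq_sinh_div_cosh]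
  refine ((Real.hasDerivAt_sinh x).div (Real.hasDerivAt_cosh x) hcosh).congr_deriv ?_
  field_simp

/-- The sech pulse `A · sech(s (x - x₀) + b)` with amplitude `A`, rate `s`, base point `x₀` and
phase `b`, of which `tailProfile` is an instance. The base point `x₀`, at the vertex, is kept apart
from `b` because the phase enters the vertex condition only through `tanh b`. -/
noncomputable def sechProfile (A s x₀ b : ℝ) : ℝ → ℝ := fun x =>
  A * (1 / Real.cosh (s * (x - x₀) + b))

section sechProfile

variable (A s x₀ b : ℝ)

theorem sechProfile_ne_zero {A : ℝ} (hA : A ≠ 0) (x : ℝ) : sechProfile A s x₀ b x ≠ 0 :=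
  mul_ne_zero hA (one_div_ne_zero (Real.cosh_pos _).ne')

theorem hasDerivAt_phase (x : ℝ) : HasDerivAt (fun x => s * (x - x₀) + b) s x := by
  simpa only [id, mul_one] using (((hasDerivAt_id x).sub_const x₀).const_mul s).add_const b

theorem hasDerivAt_sechProfile (x : ℝ) :
    HasDerivAt (sechProfile A s x₀ b)
      (-s * Real.tanh (s * (x - x₀) + b) * sechProfile A s x₀ b x) x := by
  have hcosh := (Real.cosh_pos (s * (x - x₀) + b)).ne'
  refine (((hasDerivAt_const x (1 : ℝ)).div (hasDerivAt_phase s x₀ b x).cosh hcosh).const_mul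
    A).congr_deriv ?_
  rw [sechProfile, Real.tanh_eq_sinh_div_cosh]
  ring

theorem deriv_sechProfile :
    deriv (sechProfile A s x₀ b) =
      fun x => -s * Real.tanh (s * (x - x₀) + b) * sechProfile A s x₀ b x :=
  funext fun x => (hasDerivAt_sechProfile A s x₀ b x).deriv

theorem deriv_deriv_sechProfile :
    deriv (deriv (sechProfile A s x₀ b)) =
      fun x => s ^ 2 * (2 * Real.tanh (s * (x - x₀) + b) ^ 2 - 1) * sechProfile A s x₀ b x := by
  funext x
  have htanh : HasDerivAt (fun x => Real.tanh (s * (x - x₀) + b))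
      ((1 - Real.tanh (s * (x - x₀) + b) ^ 2) * s) x :=
    (hasDerivAt_tanh _).comp x (hasDerivAt_phase s x₀ b x)
  rw [deriv_sechProfile, ((htanh.const_mul (-s)).fun_mul (hasDerivAt_sechProfile A s x₀ b x)).deriv]
  ring

theorem sechProfile_vertex_defect {s b Z ν : ℝ} (hb : Z * s * Real.tanh b = -ν) :
    Z * (ν * deriv (sechProfile A s x₀ b) x₀ - Z * deriv (deriv (sechProfile A s x₀ b)) x₀) =
      (s ^ 2 * Z ^ 2 - ν ^ 2) * sechProfile A s x₀ b x₀ := by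
  rw [deriv_deriv_sechProfile, deriv_sechProfile]
  simp only [sub_self, mul_zero, zero_add]
  linear_combination (ν - 2 * (Z * s * Real.tanh b)) * sechProfile A s x₀ b x₀ * hb

end sechProfile

theorem tailProfile_derivative_vertex_condition_impossible_general
    {A ν Z ω : ℝ} (L : ℝ) (hA : A ≠ 0) (hZ : Z ≠ 0) (hω : ν ^ 2 / Z ^ 2 < ω) :
    let Ψ := sechProfile A √ω L (arctanh (-ν / (Z * √ω)))
    (ν * deriv Ψ L = Z * deriv (deriv Ψ) L → ω * Z ^ 2 = ν ^ 2) ∧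
      ν * deriv Ψ L ≠ Z * deriv (deriv Ψ) L := by
  intro Ψ
  have hω0 : 0 < ω := lt_of_le_of_lt (by positivity) hω
  have hphase : Z * √ω * Real.tanh (arctanh (-ν / (Z * √ω))) = -ν := by
    rw [tanh_arctanh (neg_div_mul_sqrt_mem_Ioo hZ hω),
      mul_div_cancel₀ _ (mul_ne_zero hZ (Real.sqrt_pos.2 hω0).ne')]
  have hdefect := sechProfile_vertex_defect A L hphase
  rw [Real.sq_sqrt hω0.le] at hdefect
  have heq (h : ν * deriv Ψ L = Z * deriv (deriv Ψ) L) : ω * Z ^ 2 = ν ^ 2 := by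
    rw [sub_eq_zero.2 h, mul_zero, zero_eq_mul] at hdefect
    exact sub_eq_zero.1 (hdefect.resolve_right (sechProfile_ne_zero _ _ _ hA L))
  have hlt : ν ^ 2 < ω * Z ^ 2 := (div_lt_iff₀ (by positivity)).1 hω
  exact ⟨heq, fun h => hlt.ne' (heq h)⟩

/-- For `L > 0`, `N ≥ 1`, `Z < 0` and `ω > N²/Z²`: if
`N·Ψ'(L) = Z·Ψ''(L)` then `ω·Z² = N²`; in particular, since `ω > N²/Z²`, the equality
`N·Ψ'(L) = Z·Ψ''(L)` is impossible. -/
theorem tailProfile_derivative_vertex_condition_impossible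
    (L : ℝ) (hL : 0 < L) (N : ℕ) (hN : 1 ≤ N)
    (Z : ℝ) (hZ : Z < 0) (ω : ℝ) (hω : (N : ℝ) ^ 2 / Z ^ 2 < ω) :
    (((N : ℝ) * deriv (tailProfile L ω Z N) L
        = Z * deriv (deriv (tailProfile L ω Z N)) L) → ω * Z ^ 2 = (N : ℝ) ^ 2) ∧
    (N : ℝ) * deriv (tailProfile L ω Z N) L
      ≠ Z * deriv (deriv (tailProfile L ω Z N)) L := by
  have hω0 : 0 < ω := lt_of_le_of_lt (by positivity) hω
  exact tailProfile_derivative_vertex_condition_impossible_general L (by positivity) hZ.ne hω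
end
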